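/- arXiv:2109.09877 — 2 statements merged into one kernel-verified Lean document; each statement's English description precedes it below -/
import Mathlib

section
/- Let p > 3 be a prime. Then ∑_{k=1}^{(p-1)/2} H_{(p+1)/2-k}/k ≡ -8·q_p(2) + 4·q_p(2)^2 + 4p·q_p(2)^2 + 8p·q_p(2) - 4p·q_p(2)^3 - (7/3)·p·B_{p-3} modulo p^2 (as rational numbers). -/
/-- Two rationals `a` and `b` are congruent modulo `p^r`:
the `p`-adic valuation of `a - b` is at least `r`, i.e. `a - b = c * p^r`
with the denominator of `c` not divisible by `p`. -/
def ratCongr (p r : ℕ) (a b : ℚ) : Prop :=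
  ∃ c : ℚ, a - b = c * (p : ℚ) ^ r ∧ ¬ (p ∣ c.den)

/-- The Fermat quotient `q_p(2) = (2^(p-1) - 1)/p` (an integer for odd primes),
viewed as a rational number. -/
def fermatQ (p : ℕ) : ℚ := ((2 : ℚ) ^ (p - 1) - 1) / p

/-!
Write `q` for the Fermat quotient, `n = (p - 1) / 2`, and `H`, `A`, `T` for the sums of `1 / k`,
`1 / k ^ 2`, `1 / k ^ 3` over `1 ≤ k ≤ n`. The convolution of harmonic numbers telescopes, so the
left-hand side equals `H ^ 2 + 2 * H / (n + 1) - A`, and it remains to find `H` and `A` modulo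
`p ^ 2`.

A sum or product over `1, …, 2 * n` can be split into pairs `k, p - k` or into pairs
`2 * k, p - 2 * k`. Comparing the two splittings
* of `(2 * n)!` gives `2 ^ (p - 1) * ∏ (1 - p / (2 * k)) = ∏ (1 - p / k)`, hence
  `H ≡ -2 * q + p * q ^ 2` once `p ∣ A` is known;
* of `∑ 1 / k ^ 2` gives `6 * A + 7 * p * T ≡ 0` modulo `p ^ 2`;
* of `∑ k ^ (p - 3)`, which is `p * B_{p-3}` modulo `p ^ 2`, gives `T ≡ -2 * B_{p-3}` modulo `p`,
  since `1 / k ^ 3 ≡ k ^ (p - 4)`.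
-/

open Finset

section Splitting

variable {M N : Type*} [CommMonoid M] [AddCommMonoid N]

lemma prod_Icc_two_mul_eq_prod_mul_reflect (n : ℕ) (f : ℕ → M) :
    ∏ k ∈ Icc 1 (2 * n), f k = ∏ k ∈ Icc 1 n, f k * f (2 * n + 1 - k) := by
  have hreflect : ∏ k ∈ Ico 1 (n + 1), f (2 * n + 1 - k) = ∏ k ∈ Ico (n + 1) (2 * n + 1), f k := by
    rw [prod_Ico_reflect f 1 (by omega), Nat.add_sub_cancel, two_mul]
    congr 2
    omega
  simp only [← Ico_add_one_right_eq_Icc, prod_mul_distrib]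
  rw [hreflect, prod_Ico_consecutive f (by omega) (by omega)]

lemma prod_Icc_two_mul_eq_prod_two_mul_mul_reflect (n : ℕ) (f : ℕ → M) :
    ∏ k ∈ Icc 1 (2 * n), f k = ∏ k ∈ Icc 1 n, f (2 * k) * f (2 * n + 1 - 2 * k) := by
  have hreflect : ∏ k ∈ Ico 1 (n + 1), f (2 * n + 1 - 2 * k) =
      ∏ k ∈ Ico 1 (n + 1), f (2 * k - 1) := by
    refine prod_nbij' (n + 1 - ·) (n + 1 - ·) ?_ ?_ ?_ ?_ fun k hk => congrArg f ?_ <;>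
      simp only [mem_Ico] at * <;> omega
  have heven_odd : ∏ k ∈ Icc 1 (2 * n), f k = ∏ k ∈ Icc 1 n, f (2 * k) * f (2 * k - 1) := by
    clear hreflect
    induction n with
    | zero => rfl
    | succ n ih =>
      rw [mul_add_one, prod_Icc_succ_top (by omega), prod_Icc_succ_top (by omega),
        prod_Icc_succ_top (by omega), ih, mul_assoc, mul_comm (f (2 * n + 1))]
      rfl
  rw [heven_odd]
  simp only [prod_mul_distrib, ← Ico_add_one_right_eq_Icc, hreflect]

lemma sum_Icc_two_mul_eq_sum_add_reflect (n : ℕ) (f : ℕ → N) :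
    ∑ k ∈ Icc 1 (2 * n), f k = ∑ k ∈ Icc 1 n, (f k + f (2 * n + 1 - k)) :=
  prod_Icc_two_mul_eq_prod_mul_reflect (M := Multiplicative N) n f

lemma sum_Icc_two_mul_eq_sum_two_mul_add_reflect (n : ℕ) (f : ℕ → N) :
    ∑ k ∈ Icc 1 (2 * n), f k = ∑ k ∈ Icc 1 n, (f (2 * k) + f (2 * n + 1 - 2 * k)) :=
  prod_Icc_two_mul_eq_prod_two_mul_mul_reflect (M := Multiplicative N) n f

end Splitting

lemma four_pow_mul_prod_one_sub_mul_inv_two_mul {K : Type*} [Field K] [CharZero K] (n : ℕ) :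
    4 ^ n * ∏ k ∈ Icc 1 n, (1 - (2 * n + 1) * (2 * (k : K))⁻¹) =
      ∏ k ∈ Icc 1 n, (1 - (2 * n + 1) * (k : K)⁻¹) := by
  have hfactorial : ∏ k ∈ Icc 1 n, (2 * k : K) * (2 * n + 1 - 2 * k) =
      ∏ k ∈ Icc 1 n, (k : K) * (2 * n + 1 - k) := by
    have hsplit := (prod_Icc_two_mul_eq_prod_two_mul_mul_reflect n (Nat.cast (R := K))).symm.trans
      (prod_Icc_two_mul_eq_prod_mul_reflect n _)
    convert hsplit using 2 with k hk k hk <;>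
    · rw [mem_Icc] at hk
      rw [Nat.cast_sub (by omega)]
      push_cast
      rfl
  calc 4 ^ n * ∏ k ∈ Icc 1 n, (1 - (2 * n + 1) * (2 * (k : K))⁻¹)
      = ∏ k ∈ Icc 1 n, 4 * (1 - (2 * n + 1) * (2 * (k : K))⁻¹) := by
        rw [prod_mul_distrib, prod_const, Nat.card_Icc, Nat.add_sub_cancel]
    _ = ∏ k ∈ Icc 1 n, (2 * k : K) * (2 * n + 1 - 2 * k) / -k ^ 2 := by
        refine prod_congr rfl fun k hk => ?_
        have hk0 : (k : K) ≠ 0 := Nat.cast_ne_zero.2 (by rw [mem_Icc] at hk; omega)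
        field_simp
        ring
    _ = ∏ k ∈ Icc 1 n, (k : K) * (2 * n + 1 - k) / -k ^ 2 := by
        rw [prod_div_distrib, hfactorial, prod_div_distrib]
    _ = ∏ k ∈ Icc 1 n, (1 - (2 * n + 1) * (k : K)⁻¹) := by
        refine prod_congr rfl fun k hk => ?_
        have hk0 : (k : K) ≠ 0 := Nat.cast_ne_zero.2 (by rw [mem_Icc] at hk; omega)
        field_simp
        ring

section Convolution

open Finset.Nat

lemma sum_antidiagonal_inv_mul_inv (N : ℕ) :
    ∑ ij ∈ antidiagonal N, (ij.1 + 1 : ℚ)⁻¹ * (ij.2 + 1 : ℚ)⁻¹ =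
      2 * harmonic (N + 1) / (N + 2) := by
  have hfst : ∑ ij ∈ antidiagonal N, (ij.1 + 1 : ℚ)⁻¹ = harmonic (N + 1) := by
    rw [sum_antidiagonal_eq_sum_range_succ_mk, harmonic]
    push_cast
    rfl
  have hsnd : ∑ ij ∈ antidiagonal N, (ij.2 + 1 : ℚ)⁻¹ = harmonic (N + 1) := by
    rw [← hfst, ← sum_antidiagonal_swap]
    rfl
  have hterm : ∀ ij ∈ antidiagonal N, (ij.1 + 1 : ℚ)⁻¹ * (ij.2 + 1 : ℚ)⁻¹ =
      ((ij.1 + 1 : ℚ)⁻¹ + (ij.2 + 1 : ℚ)⁻¹) / (N + 2) := by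
    intro ij hij
    rw [← mem_antidiagonal.1 hij]
    push_cast
    field_simp
    ring
  rw [sum_congr rfl hterm, ← sum_div, sum_add_distrib, hfst, hsnd, two_mul]

lemma sum_antidiagonal_harmonic_div (N : ℕ) :
    ∑ ij ∈ antidiagonal N, harmonic ij.2 / (ij.1 + 1) =
      harmonic (N + 1) ^ 2 - ∑ k ∈ Icc 1 (N + 1), (k : ℚ)⁻¹ ^ 2 := by
  induction N with
  | zero => simp
  | succ N ih =>
    have hstep : ∑ ij ∈ antidiagonal (N + 1), harmonic ij.2 / (ij.1 + 1) =
        ∑ ij ∈ antidiagonal N, harmonic ij.2 / (ij.1 + 1) +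
          ∑ ij ∈ antidiagonal N, (ij.1 + 1 : ℚ)⁻¹ * (ij.2 + 1 : ℚ)⁻¹ := by
      rw [sum_antidiagonal_succ', harmonic_zero, zero_div, zero_add, ← sum_add_distrib]
      refine sum_congr rfl fun ij _ => ?_
      rw [harmonic_succ]
      push_cast
      ring
    rw [hstep, ih, sum_antidiagonal_inv_mul_inv, harmonic_succ (N + 1),
      sum_Icc_succ_top (Nat.le_add_left 1 (N + 1))]
    push_cast
    ring

lemma sum_Icc_harmonic_sub_div (n : ℕ) :
    ∑ k ∈ Icc 1 n, harmonic (n + 1 - k) / k =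
      harmonic n ^ 2 + 2 * harmonic n / (n + 1) - ∑ k ∈ Icc 1 n, (k : ℚ)⁻¹ ^ 2 := by
  have hconv : ∑ k ∈ Icc 1 n, harmonic (n + 1 - k) / k =
      ∑ ij ∈ antidiagonal n, harmonic ij.2 / (ij.1 + 1) := by
    rw [sum_antidiagonal_eq_sum_range_succ_mk, sum_range_succ, Nat.sub_self, harmonic_zero,
      zero_div, add_zero, ← Ico_add_one_right_eq_Icc, sum_Ico_eq_sum_range, Nat.add_sub_cancel]
    refine sum_congr rfl fun k _ => ?_
    rw [add_comm 1 k, Nat.add_sub_add_right, Nat.cast_succ]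
  rw [hconv, sum_antidiagonal_harmonic_div, harmonic_succ, sum_Icc_succ_top (by omega)]
  push_cast
  ring

end Convolution

/-- The `p`-integral rational numbers, i.e. the localization of `ℤ` at the prime `p`, encoded as
the valuation ring of the `p`-adic valuation of `ℚ`. Congruences modulo `p ^ r` are taken with
respect to this ring. -/
abbrev pIntegralRat (p : ℕ) [Fact p.Prime] : Subring ℚ :=
  (Rat.padicValuation p).integer

variable {p r : ℕ} [hp : Fact p.Prime]

section Integrality

@[simp, norm_cast]
lemma pIntegralRat.coe_ofNat (k : ℕ) [k.AtLeastTwo] :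
    ((ofNat(k) : pIntegralRat p) : ℚ) = ofNat(k) :=
  map_ofNat (pIntegralRat p).subtype k

lemma mem_pIntegralRat_iff {x : ℚ} : x ∈ pIntegralRat p ↔ ¬ p ∣ x.den :=
  Rat.padicValuation_le_one_iff

lemma inv_natCast_mem_pIntegralRat {k : ℕ} (hk : ¬ p ∣ k) : (k : ℚ)⁻¹ ∈ pIntegralRat p := by
  have hk0 : 0 < k := Nat.pos_of_ne_zero fun h => hk (h ▸ dvd_zero p)
  rwa [mem_pIntegralRat_iff, Rat.inv_natCast_den_of_pos hk0]

lemma inv_ofNat_mem_pIntegralRat {k : ℕ} [k.AtLeastTwo] (hk : k < p) :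
    (ofNat(k) : ℚ)⁻¹ ∈ pIntegralRat p :=
  inv_natCast_mem_pIntegralRat (Nat.not_dvd_of_pos_of_lt (NeZero.pos k) hk)

lemma harmonic_mem_pIntegralRat {n : ℕ} (hn : n < p) : harmonic n ∈ pIntegralRat p := by
  rw [harmonic]
  refine sum_mem fun k hk => inv_natCast_mem_pIntegralRat (Nat.not_dvd_of_pos_of_lt k.succ_pos ?_)
  rw [mem_range] at hk
  omega

lemma bernoulli_mem_pIntegralRat {m : ℕ} (hm : ¬ p - 1 ∣ m) : bernoulli m ∈ pIntegralRat p := by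
  rcases m.even_or_odd' with ⟨k, rfl | rfl⟩
  · obtain ⟨z, hz⟩ := Bernoulli.vonStaudt_clausen k
    rw [eq_sub_of_add_eq hz.symm]
    refine sub_mem (intCast_mem _ z) (sum_mem fun q hq => ?_)
    rw [mem_filter] at hq
    rw [one_div]
    refine inv_natCast_mem_pIntegralRat fun hpq => hm ?_
    rw [(Nat.prime_dvd_prime_iff_eq hp.out hq.2.1).1 hpq]
    exact hq.2.2
  · rcases k.eq_zero_or_pos with rfl | hk
    · have hp2 : p ≠ 2 := fun h => hm (by simp [h])
      rw [mul_zero, zero_add, bernoulli_one, neg_div, one_div]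
      refine neg_mem (inv_natCast_mem_pIntegralRat fun h => hp2 ?_)
      exact (Nat.prime_dvd_prime_iff_eq hp.out Nat.prime_two).1 h
    · rw [bernoulli_eq_zero_of_odd ⟨k, rfl⟩ (by omega)]
      exact zero_mem _

end Integrality

namespace ratCongr

variable {a b c d : ℚ}

lemma iff_exists : ratCongr p r a b ↔ ∃ c : pIntegralRat p, a - b = p ^ r * c := by
  simp only [ratCongr, Subtype.exists, mem_pIntegralRat_iff, mul_comm, exists_prop, and_comm]

lemma refl (a : ℚ) : ratCongr p r a a :=
  iff_exists.2 ⟨0, by simp⟩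

lemma symm (h : ratCongr p r a b) : ratCongr p r b a := by
  obtain ⟨x, hx⟩ := iff_exists.1 h
  exact iff_exists.2 ⟨-x, by push_cast; linear_combination -hx⟩

lemma add (hab : ratCongr p r a b) (hcd : ratCongr p r c d) : ratCongr p r (a + c) (b + d) := by
  obtain ⟨x, hx⟩ := iff_exists.1 hab
  obtain ⟨y, hy⟩ := iff_exists.1 hcd
  exact iff_exists.2 ⟨x + y, by push_cast; linear_combination hx + hy⟩

lemma trans (hab : ratCongr p r a b) (hbc : ratCongr p r b c) : ratCongr p r a c := by
  obtain ⟨x, hx⟩ := iff_exists.1 hab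
  obtain ⟨y, hy⟩ := iff_exists.1 hbc
  exact iff_exists.2 ⟨x + y, by push_cast; linear_combination hx + hy⟩

instance : Trans (ratCongr p r) (ratCongr p r) (ratCongr p r) := ⟨trans⟩

lemma sub (hab : ratCongr p r a b) (hcd : ratCongr p r c d) : ratCongr p r (a - c) (b - d) := by
  obtain ⟨x, hx⟩ := iff_exists.1 hab
  obtain ⟨y, hy⟩ := iff_exists.1 hcd
  exact iff_exists.2 ⟨x - y, by push_cast; linear_combination hx - hy⟩

lemma mul (ha : a ∈ pIntegralRat p) (hd : d ∈ pIntegralRat p) (hab : ratCongr p r a b)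
    (hcd : ratCongr p r c d) : ratCongr p r (a * c) (b * d) := by
  obtain ⟨x, hx⟩ := iff_exists.1 hab
  obtain ⟨y, hy⟩ := iff_exists.1 hcd
  lift a to pIntegralRat p using ha
  lift d to pIntegralRat p using hd
  exact iff_exists.2 ⟨a * y + x * d, by push_cast; linear_combination a * hy + d * hx⟩

lemma const_mul (hc : c ∈ pIntegralRat p) (hab : ratCongr p r a b) :
    ratCongr p r (c * a) (c * b) := by
  obtain ⟨x, hx⟩ := iff_exists.1 hab
  lift c to pIntegralRat p using hc
  exact iff_exists.2 ⟨c * x, by push_cast; linear_combination c * hx⟩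

lemma sum {ι : Type*} {s : Finset ι} {f g : ι → ℚ} (h : ∀ i ∈ s, ratCongr p r (f i) (g i)) :
    ratCongr p r (∑ i ∈ s, f i) (∑ i ∈ s, g i) := by
  induction s using cons_induction with
  | empty => exact refl 0
  | cons i s hi ih =>
    rw [forall_mem_cons] at h
    simpa only [sum_cons] using h.1.add (ih h.2)

lemma natCast_mul_iff : ratCongr p (r + 1) (p * a) (p * b) ↔ ratCongr p r a b := by
  have hp0 : (p : ℚ) ≠ 0 := Nat.cast_ne_zero.2 hp.out.ne_zero
  simp only [iff_exists, ← mul_sub, pow_succ', mul_assoc, mul_right_inj' hp0]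

lemma mem_pIntegralRat (h : ratCongr p r a b) (ha : a ∈ pIntegralRat p) : b ∈ pIntegralRat p := by
  obtain ⟨x, hx⟩ := iff_exists.1 h
  rw [← sub_sub_cancel a b, hx]
  exact sub_mem ha (mul_mem (pow_mem (natCast_mem _ p) r) x.2)

end ratCongr

section Splitting

variable {n : ℕ} {f g : ℕ → ℚ}

lemma ratCongr_sum_Icc_two_mul_of_reflect
    (hfg : ∀ k ∈ Icc 1 (2 * n), ratCongr p r (f (2 * n + 1 - k)) (g k)) :
    ratCongr p r (∑ k ∈ Icc 1 (2 * n), f k) (∑ k ∈ Icc 1 n, (f k + g k)) := by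
  rw [sum_Icc_two_mul_eq_sum_add_reflect]
  refine .sum fun k hk => .add (.refl _) (hfg k ?_)
  rw [mem_Icc] at hk ⊢
  omega

lemma ratCongr_sum_Icc_two_mul_of_reflect_two_mul
    (hfg : ∀ k ∈ Icc 1 (2 * n), ratCongr p r (f (2 * n + 1 - k)) (g k)) :
    ratCongr p r (∑ k ∈ Icc 1 (2 * n), f k) (∑ k ∈ Icc 1 n, (f (2 * k) + g (2 * k))) := by
  rw [sum_Icc_two_mul_eq_sum_two_mul_add_reflect]
  refine .sum fun k hk => .add (.refl _) (hfg (2 * k) ?_)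
  rw [mem_Icc] at hk ⊢
  omega

end Splitting

lemma ratCongr_pow_card_sub_one {k : ℕ} (hk : ¬ p ∣ k) : ratCongr p 1 ((k : ℚ) ^ (p - 1)) 1 := by
  have hcop : IsCoprime (k : ℤ) p :=
    Nat.isCoprime_iff_coprime.2 ((Nat.Prime.coprime_iff_not_dvd hp.out).2 hk).symm
  obtain ⟨z, hz⟩ := (Int.ModEq.pow_card_sub_one_eq_one hp.out hcop).symm.dvd
  exact ratCongr.iff_exists.2 ⟨z, by rw [pow_one]; exact_mod_cast hz⟩

lemma one_add_mul_fermatQ : 1 + p * fermatQ p = 2 ^ (p - 1) := by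
  rw [fermatQ, mul_div_cancel₀ _ (Nat.cast_ne_zero.2 hp.out.ne_zero), add_sub_cancel]

lemma fermatQ_mem_pIntegralRat (hp2 : p ≠ 2) : fermatQ p ∈ pIntegralRat p := by
  have hfermat := ratCongr_pow_card_sub_one (p := p) (k := 2)
    fun h => hp2 ((Nat.prime_dvd_prime_iff_eq hp.out Nat.prime_two).1 h)
  obtain ⟨z, hz⟩ := ratCongr.iff_exists.1 hfermat
  have hp0 : (p : ℚ) ≠ 0 := Nat.cast_ne_zero.2 hp.out.ne_zero
  rw [fermatQ, ← Nat.cast_ofNat, hz, pow_one, mul_div_cancel_left₀ _ hp0]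
  exact z.2

section Reflection

variable {k : ℕ}

lemma ratCongr_inv_one_add : ratCongr p 2 (1 + p : ℚ)⁻¹ (1 - p) := by
  have hmem : (1 + p : ℚ)⁻¹ ∈ pIntegralRat p := by
    have hdvd : ¬ p ∣ 1 + p := fun h =>
      hp.out.one_lt.ne' (Nat.dvd_one.1 ((Nat.dvd_add_left dvd_rfl).1 h))
    exact_mod_cast inv_natCast_mem_pIntegralRat hdvd
  refine ratCongr.iff_exists.2 ⟨⟨_, hmem⟩, ?_⟩
  field_simp
  ring

lemma ratCongr_sub_pow_of_even {m : ℕ} (hm : Even m) (hk : k ≤ p) :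
    ratCongr p 2 (((p - k : ℕ) : ℚ) ^ m) ((k : ℚ) ^ m - m * p * (k : ℚ) ^ (m - 1)) := by
  obtain ⟨z, hz⟩ := Polynomial.binomExpansion (Polynomial.X ^ m : Polynomial ℤ) (k : ℤ) (-p)
  refine ratCongr.iff_exists.2 ⟨z, ?_⟩
  simp only [Polynomial.eval_pow, Polynomial.eval_X, Polynomial.derivative_X_pow,
    Polynomial.eval_mul, Polynomial.eval_C] at hz
  have hz' := congrArg (Int.cast (R := ℚ)) hz
  push_cast at hz'
  rw [Nat.cast_sub hk, ← hm.neg_pow, neg_sub]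
  push_cast
  linear_combination hz'

lemma ratCongr_inv_sub_sq (hk0 : 0 < k) (hk : k < p) :
    ratCongr p 2 (((p - k : ℕ) : ℚ)⁻¹ ^ 2) ((k : ℚ)⁻¹ ^ 2 + 2 * p * (k : ℚ)⁻¹ ^ 3) := by
  have hkp : ((p - k : ℕ) : ℚ) = p - k := Nat.cast_sub hk.le
  have hpk0 : (p - k : ℚ) ≠ 0 := by rw [← hkp, Nat.cast_ne_zero]; omega
  have hk0' : (k : ℚ) ≠ 0 := Nat.cast_ne_zero.2 hk0.ne'
  obtain ⟨a, ha⟩ : ∃ a : pIntegralRat p, (a : ℚ) = (k : ℚ)⁻¹ :=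
    ⟨⟨_, inv_natCast_mem_pIntegralRat (Nat.not_dvd_of_pos_of_lt hk0 hk)⟩, rfl⟩
  obtain ⟨b, hb⟩ : ∃ b : pIntegralRat p, (b : ℚ) = ((p - k : ℕ) : ℚ)⁻¹ :=
    ⟨⟨_, inv_natCast_mem_pIntegralRat (Nat.not_dvd_of_pos_of_lt (by omega) (by omega))⟩, rfl⟩
  refine ratCongr.iff_exists.2 ⟨a ^ 2 * b * (b - a - a), ?_⟩
  push_cast
  rw [ha, hb, hkp]
  field_simp
  ring

end Reflection

lemma ratCongr_sum_pow_bernoulli {m : ℕ} (hm0 : m ≠ 0) (hm : m < p - 1) :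
    ratCongr p 2 (∑ k ∈ Icc 1 (p - 1), (k : ℚ) ^ m) (p * bernoulli m) := by
  have hfaulhaber : ∑ k ∈ Icc 1 (p - 1), (k : ℚ) ^ m = p * bernoulli m +
      ∑ j ∈ range m, p ^ 2 * (bernoulli j * (m + 1).choose j * p ^ (m - 1 - j) *
        ((m + 1 : ℕ) : ℚ)⁻¹) := by
    have hrange : ∑ k ∈ Icc 1 (p - 1), (k : ℚ) ^ m = ∑ k ∈ range p, (k : ℚ) ^ m := by
      rw [← Ico_add_one_right_eq_Icc, Nat.sub_add_cancel hp.out.one_le, range_eq_Ico,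
        sum_eq_sum_Ico_succ_bot hp.out.pos]
      simp [hm0]
    rw [hrange, sum_range_pow, sum_range_succ, add_comm, Nat.choose_succ_self_right,
      Nat.add_sub_cancel_left, pow_one]
    push_cast
    congr 1
    · field_simp
    · refine sum_congr rfl fun j hj => ?_
      rw [mem_range] at hj
      rw [show m + 1 - j = 2 + (m - 1 - j) by omega]
      ring
  have hinv : ((m + 1 : ℕ) : ℚ)⁻¹ ∈ pIntegralRat p :=
    inv_natCast_mem_pIntegralRat (Nat.not_dvd_of_pos_of_lt (by omega) (by omega))
  have hbernoulli : ∀ j ∈ range m, bernoulli j ∈ pIntegralRat p := by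
    intro j hj
    rw [mem_range] at hj
    rcases j.eq_zero_or_pos with rfl | hj0
    · rw [bernoulli_zero]
      exact one_mem _
    · exact bernoulli_mem_pIntegralRat (Nat.not_dvd_of_pos_of_lt hj0 (by omega))
  have hmem : ∑ j ∈ range m, bernoulli j * (m + 1).choose j * p ^ (m - 1 - j) *
      ((m + 1 : ℕ) : ℚ)⁻¹ ∈ pIntegralRat p :=
    sum_mem fun j hj => mul_mem (mul_mem (mul_mem (hbernoulli j hj) (natCast_mem _ _))
      (pow_mem (natCast_mem _ _) _)) hinv
  refine ratCongr.iff_exists.2 ⟨⟨_, hmem⟩, ?_⟩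
  rw [hfaulhaber, add_sub_cancel_left, mul_sum]

lemma ratCongr_two_mul_prod_one_sub {ι : Type*} {s : Finset ι} {a : ι → ℚ}
    (ha : ∀ i ∈ s, a i ∈ pIntegralRat p) :
    ratCongr p 3 (2 * ∏ i ∈ s, (1 - p * a i))
      (2 - 2 * p * ∑ i ∈ s, a i + p ^ 2 * ((∑ i ∈ s, a i) ^ 2 - ∑ i ∈ s, a i ^ 2)) := by
  induction s using cons_induction with
  | empty => simpa using ratCongr.refl (p := p) (r := 3) 2
  | cons j s hj ih =>
    rw [forall_mem_cons] at ha
    obtain ⟨x, hx⟩ := ratCongr.iff_exists.1 (ih ha.2)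
    obtain ⟨y, hy⟩ : ∃ y : pIntegralRat p, (y : ℚ) = a j := ⟨⟨_, ha.1⟩, rfl⟩
    obtain ⟨S, hS⟩ : ∃ S : pIntegralRat p, (S : ℚ) = ∑ i ∈ s, a i := ⟨⟨_, sum_mem ha.2⟩, rfl⟩
    obtain ⟨T, hT⟩ : ∃ T : pIntegralRat p, (T : ℚ) = ∑ i ∈ s, a i ^ 2 :=
      ⟨⟨_, sum_mem fun i hi => pow_mem (ha.2 i hi) 2⟩, rfl⟩
    rw [prod_cons, sum_cons, sum_cons, ← hS, ← hT, ← hy]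
    rw [← hS, ← hT] at hx
    refine ratCongr.iff_exists.2 ⟨x * (1 - p * y) - (S ^ 2 - T) * y, ?_⟩
    push_cast
    linear_combination (1 - p * y) * hx

section HalfSums

variable {n : ℕ}

lemma ratCongr_sum_inv_sq_sum_inv_cube (hpn : p = 2 * n + 1) :
    ratCongr p 2 (6 * ∑ k ∈ Icc 1 n, (k : ℚ)⁻¹ ^ 2) (-7 * p * ∑ k ∈ Icc 1 n, (k : ℚ)⁻¹ ^ 3) := by
  have hreflect : ∀ k ∈ Icc 1 (2 * n), ratCongr p 2 (((2 * n + 1 - k : ℕ) : ℚ)⁻¹ ^ 2)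
      ((k : ℚ)⁻¹ ^ 2 + 2 * p * (k : ℚ)⁻¹ ^ 3) := fun k hk => by
    rw [mem_Icc] at hk
    rw [← hpn]
    exact ratCongr_inv_sub_sq (by omega) (by omega)
  obtain ⟨x, hx⟩ := ratCongr.iff_exists.1 <|
    (ratCongr_sum_Icc_two_mul_of_reflect (f := fun k => (k : ℚ)⁻¹ ^ 2) hreflect).symm.trans
      (ratCongr_sum_Icc_two_mul_of_reflect_two_mul hreflect)
  push_cast at hx
  simp only [mul_inv, mul_pow, sum_add_distrib, ← mul_sum] at hx
  refine ratCongr.iff_exists.2 ⟨4 * x, ?_⟩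
  push_cast
  linear_combination 4 * hx

lemma ratCongr_bernoulli_sum_pow (hpn : p = 2 * n + 1) {l : ℕ} (hl : Odd l)
    (hlp : l + 1 < p - 1) :
    ratCongr p 1 ((2 ^ (l + 1) - 1) * bernoulli (l + 1))
      (-(2 ^ l * (l + 1)) * ∑ k ∈ Icc 1 n, (k : ℚ) ^ l) := by
  have hreflect : ∀ k ∈ Icc 1 (2 * n), ratCongr p 2 (((2 * n + 1 - k : ℕ) : ℚ) ^ (l + 1))
      ((k : ℚ) ^ (l + 1) - (l + 1 : ℕ) * p * (k : ℚ) ^ l) := fun k hk => by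
    rw [mem_Icc] at hk
    rw [← hpn]
    exact ratCongr_sub_pow_of_even hl.add_one (by omega)
  have hbernoulli := ratCongr_sum_pow_bernoulli (p := p) (m := l + 1) l.succ_ne_zero hlp
  rw [show p - 1 = 2 * n by omega] at hbernoulli
  obtain ⟨x, hx⟩ := ratCongr.iff_exists.1 <|
    hbernoulli.symm.trans (ratCongr_sum_Icc_two_mul_of_reflect hreflect)
  obtain ⟨y, hy⟩ := ratCongr.iff_exists.1 <|
    hbernoulli.symm.trans (ratCongr_sum_Icc_two_mul_of_reflect_two_mul hreflect)
  push_cast at hx hy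
  simp only [mul_pow, sum_add_distrib, sum_sub_distrib, ← mul_sum, mul_left_comm _ (2 ^ _ : ℚ)]
    at hx hy
  rw [← ratCongr.natCast_mul_iff]
  refine ratCongr.iff_exists.2 ⟨2 ^ (l + 1) * x - y, ?_⟩
  push_cast
  linear_combination 2 ^ (l + 1) * hx - hy

lemma ratCongr_sum_inv_cube_sum_pow (hp3 : 3 < p) (hpn : p = 2 * n + 1) :
    ratCongr p 1 (∑ k ∈ Icc 1 n, (k : ℚ)⁻¹ ^ 3) (∑ k ∈ Icc 1 n, (k : ℚ) ^ (p - 4)) := by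
  refine .sum fun k hk => ?_
  rw [mem_Icc] at hk
  have hdvd : ¬ p ∣ k := Nat.not_dvd_of_pos_of_lt hk.1 (by omega)
  have hk0 : (k : ℚ) ≠ 0 := Nat.cast_ne_zero.2 (by omega)
  have hfermat := (ratCongr_pow_card_sub_one hdvd).symm.const_mul
    (pow_mem (inv_natCast_mem_pIntegralRat hdvd) 3)
  rwa [mul_one, show p - 1 = p - 4 + 3 by omega, pow_add, mul_left_comm, ← mul_pow,
    inv_mul_cancel₀ hk0, one_pow, mul_one] at hfermat

lemma ratCongr_sum_inv_cube (hp3 : 3 < p) (hpn : p = 2 * n + 1) :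
    ratCongr p 1 (∑ k ∈ Icc 1 n, (k : ℚ)⁻¹ ^ 3) (-2 * bernoulli (p - 3)) := by
  have hinv : (3 : ℚ)⁻¹ ∈ pIntegralRat p := inv_ofNat_mem_pIntegralRat hp3
  have hB : bernoulli (p - 3) ∈ pIntegralRat p :=
    bernoulli_mem_pIntegralRat (Nat.not_dvd_of_pos_of_lt (by omega) (by omega))
  have hG : ∑ k ∈ Icc 1 n, (k : ℚ) ^ (p - 4) ∈ pIntegralRat p :=
    sum_mem fun k _ => pow_mem (natCast_mem _ k) _
  have hfermat : (2 : ℚ) ^ (p - 4) * 8 = 1 + p * fermatQ p := by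
    rw [one_add_mul_fermatQ, show p - 1 = p - 4 + 3 by omega, pow_add]
    norm_num
  have hbernoulli := ratCongr_bernoulli_sum_pow hpn (l := p - 4) ⟨n - 2, by omega⟩ (by omega)
  rw [show p - 4 + 1 = p - 3 by omega] at hbernoulli
  obtain ⟨x, hx⟩ := ratCongr.iff_exists.1 hbernoulli
  obtain ⟨y, hy⟩ := ratCongr.iff_exists.1 (ratCongr_sum_inv_cube_sum_pow hp3 hpn)
  have hq := fermatQ_mem_pIntegralRat (p := p) (by omega)
  lift fermatQ p to pIntegralRat p using hq with q
  lift bernoulli (p - 3) to pIntegralRat p using hB with B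
  lift ∑ k ∈ Icc 1 n, (k : ℚ) ^ (p - 4) to pIntegralRat p using hG with G
  lift (3 : ℚ)⁻¹ to pIntegralRat p using hinv with t ht
  have hcast : ((p - 4 : ℕ) : ℚ) = p - 4 := Nat.cast_sub (by omega)
  rw [hcast, show p - 3 = p - 4 + 1 by omega, pow_succ] at hx
  refine ratCongr.iff_exists.2 ⟨y + t * (2 * q * B + G + q * (p - 3) * G - 8 * x), ?_⟩
  push_cast
  rw [ht]
  linear_combination hy - 8 / 3 * hx + (2 * B + (p - 3) * G) / 3 * hfermat

lemma ratCongr_sum_inv_sq (hp3 : 3 < p) (hpn : p = 2 * n + 1) :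
    ratCongr p 2 (∑ k ∈ Icc 1 n, (k : ℚ)⁻¹ ^ 2) (7 / 3 * p * bernoulli (p - 3)) := by
  obtain ⟨s, hs⟩ : ∃ s : pIntegralRat p, (s : ℚ) = 2⁻¹ :=
    ⟨⟨_, inv_ofNat_mem_pIntegralRat (Nat.lt_of_succ_lt hp3)⟩, rfl⟩
  obtain ⟨t, ht⟩ : ∃ t : pIntegralRat p, (t : ℚ) = 3⁻¹ :=
    ⟨⟨_, inv_ofNat_mem_pIntegralRat hp3⟩, rfl⟩
  have hcube : ratCongr p 2 (p * ∑ k ∈ Icc 1 n, (k : ℚ)⁻¹ ^ 3) (p * (-2 * bernoulli (p - 3))) :=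
    ratCongr.natCast_mul_iff.2 (ratCongr_sum_inv_cube hp3 hpn)
  obtain ⟨x, hx⟩ := ratCongr.iff_exists.1 (ratCongr_sum_inv_sq_sum_inv_cube hpn)
  obtain ⟨y, hy⟩ := ratCongr.iff_exists.1 hcube
  refine ratCongr.iff_exists.2 ⟨s * t * (x - 7 * y), ?_⟩
  push_cast
  rw [hs, ht]
  linear_combination 6⁻¹ * hx - 7 / 6 * hy

lemma ratCongr_harmonic_sum_inv_sq (hpn : p = 2 * n + 1) :
    ratCongr p 2 (harmonic n) (-2 * fermatQ p + p * (fermatQ p * harmonic n +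
      3 / 4 * (harmonic n ^ 2 - ∑ k ∈ Icc 1 n, (k : ℚ)⁻¹ ^ 2))) := by
  have hp2 : 2 < p := by have := hp.out.two_le; omega
  have hmem : ∀ k ∈ Icc 1 n, (k : ℚ)⁻¹ ∈ pIntegralRat p := fun k hk => by
    rw [mem_Icc] at hk
    exact inv_natCast_mem_pIntegralRat (Nat.not_dvd_of_pos_of_lt hk.1 (by omega))
  have hinv : (2 : ℚ)⁻¹ ∈ pIntegralRat p := inv_ofNat_mem_pIntegralRat hp2
  have hhalf : ∀ k ∈ Icc 1 n, (2 * (k : ℚ))⁻¹ ∈ pIntegralRat p := fun k hk => by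
    rw [mul_inv]
    exact mul_mem hinv (hmem k hk)
  have hprod := four_pow_mul_prod_one_sub_mul_inv_two_mul (K := ℚ) n
  have hfermat : 1 + p * fermatQ p = 4 ^ n := by
    rw [one_add_mul_fermatQ, show p - 1 = 2 * n by omega, pow_mul]
    norm_num
  have hp' : (2 * n + 1 : ℚ) = p := by rw [hpn]; push_cast; rfl
  rw [hp', ← hfermat] at hprod
  obtain ⟨x, hx⟩ := ratCongr.iff_exists.1 (ratCongr_two_mul_prod_one_sub hhalf)
  obtain ⟨y, hy⟩ := ratCongr.iff_exists.1 (ratCongr_two_mul_prod_one_sub hmem)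
  simp only [mul_inv, mul_pow, ← mul_sum, ← harmonic_eq_sum_Icc] at hprod hx hy
  have hH := harmonic_mem_pIntegralRat (p := p) (n := n) (by omega)
  have hA := sum_mem fun k hk => pow_mem (hmem k hk) 2
  have hq := fermatQ_mem_pIntegralRat hp2.ne'
  lift fermatQ p to pIntegralRat p using hq with q
  lift harmonic n to pIntegralRat p using hH with H
  lift ∑ k ∈ Icc 1 n, (k : ℚ)⁻¹ ^ 2 to pIntegralRat p using hA with A
  obtain ⟨s, hs⟩ : ∃ s : pIntegralRat p, (s : ℚ) = 2⁻¹ := ⟨⟨_, hinv⟩, rfl⟩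
  rw [← ratCongr.natCast_mul_iff]
  refine ratCongr.iff_exists.2 ⟨y - (1 + p * q) * x - s ^ 2 * q * (H ^ 2 - A), ?_⟩
  push_cast
  rw [hs]
  linear_combination hy - (1 + p * q) * hx + 2 * hprod

lemma ratCongr_harmonic (hp3 : 3 < p) (hpn : p = 2 * n + 1) :
    ratCongr p 2 (harmonic n) (-2 * fermatQ p + p * fermatQ p ^ 2) := by
  obtain ⟨s, hs⟩ : ∃ s : pIntegralRat p, (s : ℚ) = 2⁻¹ :=
    ⟨⟨_, inv_ofNat_mem_pIntegralRat (Nat.lt_of_succ_lt hp3)⟩, rfl⟩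
  obtain ⟨t, ht⟩ : ∃ t : pIntegralRat p, (t : ℚ) = 3⁻¹ :=
    ⟨⟨_, inv_ofNat_mem_pIntegralRat hp3⟩, rfl⟩
  have hH := harmonic_mem_pIntegralRat (p := p) (n := n) (by omega)
  have hq := fermatQ_mem_pIntegralRat (p := p) (by omega)
  have hB : bernoulli (p - 3) ∈ pIntegralRat p :=
    bernoulli_mem_pIntegralRat (Nat.not_dvd_of_pos_of_lt (by omega) (by omega))
  obtain ⟨x, hx⟩ := ratCongr.iff_exists.1 (ratCongr_harmonic_sum_inv_sq hpn)
  obtain ⟨y, hy⟩ := ratCongr.iff_exists.1 (ratCongr_sum_inv_sq hp3 hpn)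
  lift harmonic n to pIntegralRat p using hH with H
  lift fermatQ p to pIntegralRat p using hq with q
  lift bernoulli (p - 3) to pIntegralRat p using hB with B
  obtain ⟨a, ha⟩ : ∃ a : pIntegralRat p, ∑ k ∈ Icc 1 n, (k : ℚ)⁻¹ ^ 2 = p * a := by
    refine ⟨7 * t * B + p * y, ?_⟩
    push_cast
    rw [ht]
    linear_combination hy
  rw [ha] at hx
  obtain ⟨w, hw⟩ : ∃ w : pIntegralRat p, (H : ℚ) + 2 * q = p * w := by
    refine ⟨q * H + 3 * s ^ 2 * (H ^ 2 - p * a) + p * x, ?_⟩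
    push_cast
    rw [hs]
    linear_combination hx
  refine ratCongr.iff_exists.2 ⟨x + q * w + 3 * s ^ 2 * (w * (H - 2 * q) - a), ?_⟩
  push_cast
  rw [hs]
  linear_combination hx + (p * q + 3 / 4 * p * (H - 2 * q)) * hw

end HalfSums

theorem sum_H_half_sub_k_div_k (p : ℕ) (hp : p.Prime) (hp3 : 3 < p) :
    ratCongr p 2
      (∑ k ∈ Finset.Icc 1 ((p - 1) / 2), harmonic ((p + 1) / 2 - k) / k)
      (-8 * fermatQ p + 4 * fermatQ p ^ 2 + 4 * p * fermatQ p ^ 2 + 8 * p * fermatQ p -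
        4 * p * fermatQ p ^ 3 - (7 / 3) * p * bernoulli (p - 3)) := by
  have : Fact p.Prime := ⟨hp⟩
  obtain ⟨n, hpn⟩ : ∃ n, p = 2 * n + 1 := hp.odd_of_ne_two (by omega)
  have hq := fermatQ_mem_pIntegralRat (p := p) (by omega)
  have hH := harmonic_mem_pIntegralRat (p := p) (n := n) (by omega)
  have hHq := ratCongr_harmonic hp3 hpn
  have hq' := hHq.mem_pIntegralRat hH
  rw [show (p - 1) / 2 = n by omega, show (p + 1) / 2 = n + 1 by omega]
  calc ∑ k ∈ Icc 1 n, harmonic (n + 1 - k) / k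
    _ = harmonic n * harmonic n + 4 * (harmonic n * (1 + p : ℚ)⁻¹) -
          ∑ k ∈ Icc 1 n, (k : ℚ)⁻¹ ^ 2 := by
        rw [sum_Icc_harmonic_sub_div, hpn]
        push_cast
        field_simp
        ring
    ratCongr p 2 _ ((-2 * fermatQ p + p * fermatQ p ^ 2) * (-2 * fermatQ p + p * fermatQ p ^ 2) +
          4 * ((-2 * fermatQ p + p * fermatQ p ^ 2) * (1 - p)) -
          7 / 3 * p * bernoulli (p - 3)) :=
        ((hHq.mul hH hq' hHq).add ((hHq.mul hH (sub_mem (one_mem _) (natCast_mem _ p))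
          ratCongr_inv_one_add).const_mul (ofNat_mem _ 4))).sub (ratCongr_sum_inv_sq hp3 hpn)
    ratCongr p 2 _ _ := by
        lift fermatQ p to pIntegralRat p using hq with q
        refine ratCongr.iff_exists.2 ⟨q ^ 4 - 4 * q ^ 2, ?_⟩
        push_cast
        ring
end

section
/- Let p > 3 be a prime. Then ∑_{k=1}^{(p-1)/2} H_{2k}·H_{2k-2}/k ≡ -4·q_p(2) + 2·q_p(2)^2 - (2/3)·q_p(2)^3 - (1/12)·B_{p-3} modulo p (as rational numbers). -/
/-!
Modulo `p`, write `u_s(j) = 1 / j ^ s` and `v_s(j) = (-1) ^ j / j ^ s` for `0 < j < p`. Separating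
the parities of `j` turns `∑ H_{2k} H_{2k-2} / k` into nested sums of the `u_s` and `v_s` of weight
at most three. These satisfy three families of relations: the reflection `j ↦ p - j` multiplies
`u_s` and `v_s` by signs; products of sums expand into nested sums; and products of the
polylogarithms `∑ x ^ j / j ^ s` expand by partial fractions, while reflection turns the sum of
their coefficients in degrees below `p` into nested sums again. Together with a bisection of
`∑_{i < j} 1 / (i j ^ 2)`, which gives `∑ (-1) ^ j / j ^ 3` in terms of it, they leave only
`∑ (-1) ^ j / j ≡ -2 q_p(2)`, by expanding `2 ^ p`, and `∑_{i < j} 1 / (i j ^ 2) ≡ B_{p-3}`, by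
Faulhaber's formula.
-/

open Finset

section NestedSums

section CommSemiring

variable {R : Type*} [CommSemiring R]

/-- The nested sum of depth two, `∑_{i < j < n} f i * g j`. -/
def doubleSum (n : ℕ) (f g : ℕ → R) : R := ∑ j ∈ range n, (∑ i ∈ range j, f i) * g j

/-- The nested sum of depth three, `∑_{i < j < k < n} f i * g j * h k`. -/
def tripleSum (n : ℕ) (f g h : ℕ → R) : R := ∑ k ∈ range n, doubleSum k f g * h k

@[simp] lemma doubleSum_zero (f g : ℕ → R) : doubleSum 0 f g = 0 := rfl

@[simp] lemma tripleSum_zero (f g h : ℕ → R) : tripleSum 0 f g h = 0 := rfl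

lemma doubleSum_succ (n : ℕ) (f g : ℕ → R) :
    doubleSum (n + 1) f g = doubleSum n f g + (∑ i ∈ range n, f i) * g n :=
  sum_range_succ ..

lemma tripleSum_succ (n : ℕ) (f g h : ℕ → R) :
    tripleSum (n + 1) f g h = tripleSum n f g h + doubleSum n f g * h n :=
  sum_range_succ ..

lemma doubleSum_succ' (n : ℕ) (f g : ℕ → R) :
    doubleSum (n + 1) f g = ∑ j ∈ range n, (∑ i ∈ range (j + 1), f i) * g (j + 1) := by
  simp [doubleSum, sum_range_succ' _ n]

lemma tripleSum_succ' (n : ℕ) (f g h : ℕ → R) :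
    tripleSum (n + 1) f g h = ∑ k ∈ range n, doubleSum (k + 1) f g * h (k + 1) := by
  simp [tripleSum, sum_range_succ' _ n]

lemma doubleSum_add_left (n : ℕ) (f f' g : ℕ → R) :
    doubleSum n (f + f') g = doubleSum n f g + doubleSum n f' g := by
  simp only [doubleSum, Pi.add_apply, sum_add_distrib, add_mul]

lemma doubleSum_add_right (n : ℕ) (f g g' : ℕ → R) :
    doubleSum n f (g + g') = doubleSum n f g + doubleSum n f g' := by
  simp only [doubleSum, Pi.add_apply, sum_add_distrib, mul_add]

lemma tripleSum_add_right (n : ℕ) (f g h h' : ℕ → R) :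
    tripleSum n f g (h + h') = tripleSum n f g h + tripleSum n f g h' := by
  simp only [tripleSum, Pi.add_apply, sum_add_distrib, mul_add]

lemma sum_mul_sum_eq_doubleSum (n : ℕ) (f g : ℕ → R) :
    (∑ i ∈ range n, f i) * ∑ i ∈ range n, g i =
      doubleSum n f g + doubleSum n g f + ∑ i ∈ range n, (f * g) i := by
  induction n with
  | zero => simp
  | succ n ih =>
    simp only [doubleSum_succ, sum_range_succ]
    rw [add_mul, mul_add, ih, Pi.mul_apply]
    ring

lemma sum_mul_doubleSum (n : ℕ) (f g h : ℕ → R) :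
    (∑ i ∈ range n, f i) * doubleSum n g h =
      tripleSum n f g h + tripleSum n g f h + tripleSum n g h f +
        doubleSum n (f * g) h + doubleSum n g (f * h) := by
  induction n with
  | zero => simp
  | succ n ih =>
    simp only [doubleSum_succ, sum_range_succ, tripleSum_succ]
    rw [add_mul, mul_add, ih, ← mul_assoc (∑ i ∈ range n, f i), sum_mul_sum_eq_doubleSum,
      Pi.mul_apply]
    ring

lemma sum_sq_mul_eq_tripleSum (n : ℕ) (f g : ℕ → R) :
    ∑ j ∈ range n, (∑ i ∈ range j, f i) ^ 2 * g j =
      2 * tripleSum n f f g + doubleSum n (f * f) g := by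
  rw [tripleSum, doubleSum, mul_sum, ← sum_add_distrib]
  refine sum_congr rfl fun j _ => ?_
  rw [sq, sum_mul_sum_eq_doubleSum]
  ring

lemma sum_antidiagonal_sum_mul (n : ℕ) (f g : ℕ → R) :
    ∑ kl ∈ antidiagonal n, (∑ i ∈ range kl.1, f i) * g kl.2 =
      ∑ m ∈ range n, ∑ kl ∈ antidiagonal m, f kl.1 * g kl.2 := by
  induction n with
  | zero => simp
  | succ n ih =>
    simp only [Nat.sum_antidiagonal_succ, range_zero, sum_empty, zero_mul, zero_add,
      sum_range_succ, add_mul, sum_add_distrib, ih]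

lemma sum_range_two_mul (m : ℕ) (f : ℕ → R) :
    ∑ i ∈ range (2 * m), f i = ∑ k ∈ range m, (f (2 * k) + f (2 * k + 1)) := by
  induction m with
  | zero => simp
  | succ m ih => rw [Nat.mul_succ, sum_range_succ, sum_range_succ, ih, sum_range_succ, add_assoc]

lemma sum_range_two_mul_fold (m : ℕ) (f : ℕ → R) :
    ∑ i ∈ range (2 * m), f i = ∑ i ∈ range m, (f i + f (2 * m - 1 - i)) := by
  rw [two_mul, sum_range_add, ← sum_range_reflect fun i => f (m + i), ← sum_add_distrib]
  refine sum_congr rfl fun i hi => ?_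
  rw [← Nat.add_sub_assoc (by grind), ← Nat.add_sub_assoc (by grind)]

lemma doubleSum_two_mul (m : ℕ) {f g : ℕ → R} (hf : ∀ k, f (2 * k) = 0)
    (hg : ∀ k, g (2 * k) = 0) :
    doubleSum (2 * m) f g = doubleSum m (fun k => f (2 * k + 1)) fun k => g (2 * k + 1) := by
  simp only [doubleSum, sum_range_two_mul, hg, mul_zero, zero_add, sum_range_succ, hf, add_zero]

end CommSemiring

section CommRing

variable {R : Type*} [CommRing R]

lemma doubleSum_eq_sum_tail (n : ℕ) (f g : ℕ → R) :
    doubleSum n f g =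
      ∑ i ∈ range n, f i * (∑ j ∈ range n, g j - ∑ j ∈ range (i + 1), g j) := by
  induction n with
  | zero => simp
  | succ n ih =>
    simp only [sum_range_succ _ n, doubleSum_succ, ih, sum_mul, sub_self, mul_zero, add_zero,
      ← sum_add_distrib]
    exact sum_congr rfl fun i _ => by ring

lemma tripleSum_eq_sum_middle (n : ℕ) (f g h : ℕ → R) :
    tripleSum n f g h = ∑ j ∈ range n,
      (∑ i ∈ range j, f i) * g j * (∑ k ∈ range n, h k - ∑ k ∈ range (j + 1), h k) := by
  induction n with
  | zero => simp
  | succ n ih =>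
    simp only [sum_range_succ _ n, tripleSum_succ, ih, sub_self, mul_zero, add_zero]
    rw [doubleSum, sum_mul, ← sum_add_distrib]
    exact sum_congr rfl fun j _ => by ring

/-- Under the reflection `j ↦ n - 1 - j` of `{0, …, n - 1}`, the function `f` is multiplied
by `ε`. -/
def ReflectsWith (ε : R) (n : ℕ) (f : ℕ → R) : Prop := ∀ j < n, f (n - 1 - j) = ε * f j

namespace ReflectsWith

variable {n : ℕ} {ε δ γ : R} {f g h : ℕ → R}

lemma sum_sub_sum (hf : ReflectsWith ε n f) {j : ℕ} (hj : j ≤ n) :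
    ∑ i ∈ range n, f i - ∑ i ∈ range (n - j), f i = ε * ∑ i ∈ range j, f i := by
  induction j with
  | zero => simp
  | succ j ih =>
    have hlast : ∑ i ∈ range (n - j), f i = ∑ i ∈ range (n - (j + 1)), f i + f (n - 1 - j) := by
      rw [show n - j = n - (j + 1) + 1 by omega, sum_range_succ,
        show n - (j + 1) = n - 1 - j by omega]
    rw [sum_range_succ, mul_add, ← ih (by omega), hlast, hf j hj]
    ring

lemma sum_eq (hf : ReflectsWith ε n f) : ∑ i ∈ range n, f i = ε * ∑ i ∈ range n, f i := by
  simpa using hf.sum_sub_sum le_rfl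

lemma sum_range_sub (hf : ReflectsWith ε n f) {j : ℕ} (hj : j < n) :
    ∑ i ∈ range (n - 1 - j), f i =
      ε * (∑ i ∈ range n, f i - ∑ i ∈ range (j + 1), f i) := by
  rw [Nat.sub_sub, add_comm 1 j]
  linear_combination hf.sum_eq - hf.sum_sub_sum hj

lemma doubleSum_eq (hf : ReflectsWith ε n f) (hg : ReflectsWith δ n g) :
    doubleSum n f g = ε * δ * doubleSum n g f := by
  rw [doubleSum, ← sum_range_reflect, doubleSum_eq_sum_tail n g f, mul_sum]
  refine sum_congr rfl fun j hj => ?_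
  rw [hf.sum_range_sub (mem_range.1 hj), hg j (mem_range.1 hj)]
  ring

lemma tripleSum_eq (hf : ReflectsWith ε n f) (hg : ReflectsWith δ n g)
    (hh : ReflectsWith γ n h) :
    tripleSum n f g h = ε * δ * γ * tripleSum n h g f := by
  rw [tripleSum_eq_sum_middle, ← sum_range_reflect, tripleSum_eq_sum_middle n h g f, mul_sum]
  refine sum_congr rfl fun j hj => ?_
  have hj' := mem_range.1 hj
  rw [hf.sum_range_sub hj', hg j hj', show n - 1 - j + 1 = n - j by omega,
    hh.sum_sub_sum hj'.le]
  ring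

lemma two_mul_doubleSum (hf : ReflectsWith ε n f) (hg : ReflectsWith δ n g) (hεδ : ε * δ = 1) :
    2 * doubleSum n f g =
      (∑ i ∈ range n, f i) * ∑ i ∈ range n, g i - ∑ i ∈ range n, (f * g) i := by
  have hswap := hf.doubleSum_eq hg
  rw [hεδ, one_mul] at hswap
  linear_combination hswap - sum_mul_sum_eq_doubleSum n f g

lemma sum_convolution (hg : ReflectsWith ε (n + 1) g) :
    ∑ m ∈ range n, ∑ kl ∈ antidiagonal m, f kl.1 * g kl.2 = ε * doubleSum (n + 1) f g := by
  rw [← sum_antidiagonal_sum_mul, Nat.sum_antidiagonal_eq_sum_range_succ_mk, doubleSum, mul_sum]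
  refine sum_congr rfl fun k hk => ?_
  have hgk : g (n - k) = ε * g k := hg k (mem_range.1 hk)
  rw [hgk]
  ring

end ReflectsWith

end CommRing

end NestedSums

section PolylogarithmCoefficients

variable {K : Type*} [Field K]

/-- The coefficients `x ^ (k + 1) / (k + 1) ^ s` of the polylogarithm `Li_s(x) = ∑ x ^ j / j ^ s`.
The index is `k = j - 1`, so that the sums with `j < p` run over `range (p - 1)` and `x = 1`,
`x = -1` give the ordinary and the alternating harmonic sums. -/
def liCoeff (x : K) (s k : ℕ) : K := x ^ (k + 1) / ((k : K) + 1) ^ s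

lemma liCoeff_mul_liCoeff (x y : K) (s t : ℕ) :
    liCoeff x s * liCoeff y t = liCoeff (x * y) (s + t) := by
  ext k
  rw [Pi.mul_apply, liCoeff, liCoeff, liCoeff, mul_pow, pow_add _ s t, div_mul_div_comm]

lemma liCoeff_add_liCoeff_neg_even (x : K) (s k : ℕ) :
    (liCoeff x s + liCoeff (-x) s) (2 * k) = 0 := by
  simp [liCoeff, (odd_two_mul_add_one k).neg_pow, neg_div]

lemma two_pow_mul_liCoeff_add_liCoeff_neg_odd (h2 : (2 : K) ≠ 0) (x : K) (s k : ℕ) :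
    2 ^ s * (liCoeff x (s + 1) + liCoeff (-x) (s + 1)) (2 * k + 1) =
      liCoeff (x ^ 2) (s + 1) k := by
  have heven : Even (2 * k + 1 + 1) := ⟨k + 1, by ring⟩
  have hden : ((2 * k + 1 : ℕ) : K) + 1 = 2 * ((k : K) + 1) := by push_cast; ring
  simp only [Pi.add_apply, liCoeff, heven.neg_pow, hden, mul_pow]
  rw [← pow_mul, mul_add_one]
  field_simp
  ring

lemma two_pow_mul_sum_liCoeff_add_liCoeff_neg (h2 : (2 : K) ≠ 0) (x : K) (s m : ℕ) :
    2 ^ s * ∑ i ∈ range (2 * m), (liCoeff x (s + 1) + liCoeff (-x) (s + 1)) i =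
      ∑ k ∈ range m, liCoeff (x ^ 2) (s + 1) k := by
  simp only [sum_range_two_mul, liCoeff_add_liCoeff_neg_even, zero_add, mul_sum,
    two_pow_mul_liCoeff_add_liCoeff_neg_odd h2]

lemma two_pow_mul_doubleSum_liCoeff_add_liCoeff_neg (h2 : (2 : K) ≠ 0) (x y : K) (s t m : ℕ) :
    2 ^ (s + t) * doubleSum (2 * m) (liCoeff x (s + 1) + liCoeff (-x) (s + 1))
        (liCoeff y (t + 1) + liCoeff (-y) (t + 1)) =
      doubleSum m (liCoeff (x ^ 2) (s + 1)) (liCoeff (y ^ 2) (t + 1)) := by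
  rw [doubleSum_two_mul m (liCoeff_add_liCoeff_neg_even x _) (liCoeff_add_liCoeff_neg_even y _)]
  simp only [doubleSum, ← two_pow_mul_liCoeff_add_liCoeff_neg_odd h2, ← mul_sum]
  rw [mul_sum]
  exact sum_congr rfl fun k _ => by ring

lemma liCoeff_one_mul_liCoeff_one (x : K) {k l : ℕ} (hk : (k : K) + 1 ≠ 0) (hl : (l : K) + 1 ≠ 0)
    (hkl : ((k + l + 1 : ℕ) : K) + 1 ≠ 0) :
    liCoeff x 1 k * liCoeff x 1 l =
      (liCoeff 1 1 k + liCoeff 1 1 l) * liCoeff x 1 (k + l + 1) := by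
  simp only [liCoeff, one_pow, pow_one]
  push_cast at hkl ⊢
  field_simp
  ring

section Convolution

variable {m : ℕ} (hm : ∀ i ≤ m + 1, (i : K) + 1 ≠ 0)

include hm

lemma sum_antidiagonal_mul_liCoeff (x : K) (w : ℕ → K) :
    ∑ kl ∈ antidiagonal m, w kl.1 * liCoeff x 1 kl.1 * liCoeff x 1 kl.2 =
      (∑ k ∈ range (m + 1), w k * liCoeff 1 1 k +
        ∑ kl ∈ antidiagonal m, w kl.1 * liCoeff 1 1 kl.2) * liCoeff x 1 (m + 1) := by
  rw [← Nat.sum_antidiagonal_eq_sum_range_succ_mk fun kl => w kl.1 * liCoeff 1 1 kl.1,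
    ← sum_add_distrib, sum_mul]
  refine sum_congr rfl fun ⟨k, l⟩ hkl => ?_
  obtain rfl := mem_antidiagonal.1 hkl
  have hpf := liCoeff_one_mul_liCoeff_one x (hm k (by omega)) (hm l (by omega))
    (hm (k + l + 1) le_rfl)
  linear_combination w k * hpf

lemma sum_antidiagonal_liCoeff_one_one (x : K) :
    ∑ kl ∈ antidiagonal m, liCoeff x 1 kl.1 * liCoeff x 1 kl.2 =
      2 * ((∑ k ∈ range (m + 1), liCoeff 1 1 k) * liCoeff x 1 (m + 1)) := by
  have hflip : ∑ kl ∈ antidiagonal m, liCoeff (1 : K) 1 kl.2 =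
      ∑ k ∈ range (m + 1), liCoeff 1 1 k := by
    rw [← Nat.sum_antidiagonal_swap]
    exact Nat.sum_antidiagonal_eq_sum_range_succ_mk (fun kl => liCoeff 1 1 kl.1) m
  have h := sum_antidiagonal_mul_liCoeff hm x 1
  simp only [one_mul, Pi.one_apply, hflip] at h
  rw [h]
  ring

lemma sum_antidiagonal_liCoeff_two_one (x : K) :
    ∑ kl ∈ antidiagonal m, liCoeff x 2 kl.1 * liCoeff x 1 kl.2 =
      (∑ k ∈ range (m + 1), liCoeff 1 2 k) * liCoeff x 1 (m + 1) +
        2 * ((∑ k ∈ range (m + 1), liCoeff 1 1 k) * liCoeff x 2 (m + 1)) := by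
  have h := sum_antidiagonal_mul_liCoeff hm x (liCoeff 1 1)
  have hmul (y : K) (k : ℕ) : liCoeff 1 1 k * liCoeff y 1 k = liCoeff y 2 k := by
    simpa using congrFun (liCoeff_mul_liCoeff 1 y 1 1) k
  have hx := hmul x (m + 1)
  simp only [hmul, sum_antidiagonal_liCoeff_one_one hm] at h
  rw [h, ← hx]
  ring

lemma sum_antidiagonal_sum_mul_liCoeff (x : K) :
    ∑ kl ∈ antidiagonal m,
        (∑ i ∈ range kl.1, liCoeff 1 1 i) * liCoeff x 1 kl.1 * liCoeff x 1 kl.2 =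
      3 * (doubleSum (m + 1) (liCoeff 1 1) (liCoeff 1 1) * liCoeff x 1 (m + 1)) := by
  have h := sum_antidiagonal_mul_liCoeff hm x fun k => ∑ i ∈ range k, liCoeff 1 1 i
  have hconv : ∑ kl ∈ antidiagonal m, (∑ i ∈ range kl.1, liCoeff (1 : K) 1 i) * liCoeff 1 1 kl.2 =
      2 * doubleSum (m + 1) (liCoeff 1 1) (liCoeff 1 1) := by
    rw [sum_antidiagonal_sum_mul, doubleSum_succ', mul_sum]
    refine sum_congr rfl fun r hr => sum_antidiagonal_liCoeff_one_one (fun i hi => hm i ?_) 1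
    grind
  simp only [hconv] at h
  rw [h, doubleSum]
  ring

end Convolution

section ShuffleRelations

variable {ε x : K} {n : ℕ} (hn : ∀ i < n, (i : K) + 1 ≠ 0) (hx : ReflectsWith ε n (liCoeff x 1))

include hn hx

lemma doubleSum_liCoeff_one_one :
    ε * doubleSum n (liCoeff x 1) (liCoeff x 1) = 2 * doubleSum n (liCoeff 1 1) (liCoeff x 1) := by
  rcases n with _ | n
  · simp
  rw [← hx.sum_convolution, doubleSum_succ', mul_sum]
  exact sum_congr rfl fun m hm => sum_antidiagonal_liCoeff_one_one (by grind) x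

lemma doubleSum_liCoeff_two_one :
    ε * doubleSum n (liCoeff x 2) (liCoeff x 1) =
      doubleSum n (liCoeff 1 2) (liCoeff x 1) + 2 * doubleSum n (liCoeff 1 1) (liCoeff x 2) := by
  rcases n with _ | n
  · simp
  rw [← hx.sum_convolution, doubleSum_succ', doubleSum_succ', mul_sum, ← sum_add_distrib]
  exact sum_congr rfl fun m hm => sum_antidiagonal_liCoeff_two_one (by grind) x

lemma tripleSum_liCoeff_one_one :
    ε * tripleSum n (liCoeff 1 1) (liCoeff x 1) (liCoeff x 1) =
      3 * tripleSum n (liCoeff 1 1) (liCoeff 1 1) (liCoeff x 1) := by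
  rcases n with _ | n
  · simp
  have hconv := hx.sum_convolution (f := fun k => (∑ i ∈ range k, liCoeff 1 1 i) * liCoeff x 1 k)
  have hsucc := tripleSum_succ' n (liCoeff 1 1) (liCoeff 1 1) (liCoeff x 1)
  rw [hsucc, mul_sum]
  refine hconv.symm.trans ?_
  exact sum_congr rfl fun m hm => sum_antidiagonal_sum_mul_liCoeff (by grind) x

end ShuffleRelations

end PolylogarithmCoefficients

section HarmonicProducts

variable {K : Type*} [Field K] {m : ℕ} (hm : ∀ i < 2 * m, (i : K) + 1 ≠ 0)

local notation "recip" => liCoeff (1 : K)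

local notation "altRecip" => liCoeff (-1 : K)

include hm

-- `1 / ((2k + 1) (2k + 2)) = 1 / (2k + 1) - 1 / (2k + 2)` is where the alternating terms come from.
lemma sum_harmonic_mul_harmonic_div_eq_sum :
    ∑ k ∈ range m, (∑ i ∈ range (2 * k + 2), recip 1 i) *
        (∑ i ∈ range (2 * k), recip 1 i) / ((k : K) + 1) =
      ∑ j ∈ range (2 * m),
        ((∑ i ∈ range j, recip 1 i) ^ 2 * (recip 1 + altRecip 1) j +
          (∑ i ∈ range j, recip 1 i) * (recip 2 + altRecip 2) j +
          2 * ((∑ i ∈ range j, recip 1 i) * altRecip 1 j + altRecip 2 j +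
            altRecip 1 j)) := by
  rw [sum_range_two_mul]
  refine sum_congr rfl fun k hk => ?_
  have hodd := hm (2 * k) (by grind)
  have heven := hm (2 * k + 1) (by grind)
  have hsign : (-1 : K) ^ (2 * k) = 1 := by simp
  simp only [sum_range_succ _ (2 * k + 1), sum_range_succ _ (2 * k), Pi.add_apply]
  generalize ∑ i ∈ range (2 * k), recip 1 i = H
  simp only [liCoeff, one_pow, pow_succ, hsign]
  push_cast at hodd heven ⊢
  have hdouble : (2 : K) * k + 1 + 1 = 2 * (k + 1) := by ring
  rw [hdouble] at heven ⊢
  obtain ⟨h2, hk'⟩ := mul_ne_zero_iff.1 heven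
  field_simp
  ring

lemma sum_harmonic_mul_harmonic_div :
    ∑ k ∈ range m, (∑ i ∈ range (2 * k + 2), recip 1 i) *
        (∑ i ∈ range (2 * k), recip 1 i) / ((k : K) + 1) =
      2 * tripleSum (2 * m) (recip 1) (recip 1) (recip 1) +
        2 * tripleSum (2 * m) (recip 1) (recip 1) (altRecip 1) +
        doubleSum (2 * m) (recip 2) (recip 1 + altRecip 1) +
        doubleSum (2 * m) (recip 1) (recip 2 + altRecip 2) +
        2 * (doubleSum (2 * m) (recip 1) (altRecip 1) +
          ∑ i ∈ range (2 * m), altRecip 2 i + ∑ i ∈ range (2 * m), altRecip 1 i) := by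
  have hsq := sum_sq_mul_eq_tripleSum (2 * m) (recip 1) (recip 1 + altRecip 1)
  rw [liCoeff_mul_liCoeff, one_mul, tripleSum_add_right] at hsq
  rw [sum_harmonic_mul_harmonic_div_eq_sum hm, sum_add_distrib, sum_add_distrib, hsq, ← mul_sum,
    sum_add_distrib, sum_add_distrib]
  simp only [doubleSum, mul_add]

end HarmonicProducts

section Reduction

variable {K : Type*} [Field K]

/-- The rational `x` has image `a` in the field `K`, its denominator being invertible there: for
`K = ZMod p`, this says that `x` is `p`-integral with residue class `a`. The condition on the
denominator excludes the junk values of the cast `ℚ → K`. -/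
def ReducesTo (x : ℚ) (a : K) : Prop := (x.den : K) ≠ 0 ∧ (x : K) = a

namespace ReducesTo

variable {x y : ℚ} {a b : K}

lemma intCast (n : ℤ) : ReducesTo (n : ℚ) (n : K) := by simp [ReducesTo]

lemma natCast (n : ℕ) : ReducesTo (n : ℚ) (n : K) := by simp [ReducesTo]

lemma ofNat (n : ℕ) [n.AtLeastTwo] : ReducesTo (ofNat(n) : ℚ) (ofNat(n) : K) := natCast n

lemma one : ReducesTo 1 (1 : K) := by simp [ReducesTo]

lemma add (hx : ReducesTo x a) (hy : ReducesTo y b) : ReducesTo (x + y) (a + b) :=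
  ⟨ne_zero_of_dvd_ne_zero (by simpa using ⟨hx.1, hy.1⟩) (Nat.cast_dvd_cast (Rat.add_den_dvd x y)),
    by rw [Rat.cast_add_of_ne_zero hx.1 hy.1, hx.2, hy.2]⟩

lemma mul (hx : ReducesTo x a) (hy : ReducesTo y b) : ReducesTo (x * y) (a * b) :=
  ⟨ne_zero_of_dvd_ne_zero (by simpa using ⟨hx.1, hy.1⟩) (Nat.cast_dvd_cast (Rat.mul_den_dvd x y)),
    by rw [Rat.cast_mul_of_ne_zero hx.1 hy.1, hx.2, hy.2]⟩

lemma neg (hx : ReducesTo x a) : ReducesTo (-x) (-a) :=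
  ⟨by simpa using hx.1, by rw [Rat.cast_neg, hx.2]⟩

lemma sub (hx : ReducesTo x a) (hy : ReducesTo y b) : ReducesTo (x - y) (a - b) := by
  simpa only [sub_eq_add_neg] using hx.add hy.neg

lemma inv (hx : ReducesTo x a) (ha : a ≠ 0) : ReducesTo x⁻¹ a⁻¹ := by
  obtain ⟨hden, rfl⟩ := hx
  have hnum : (x.num : K) ≠ 0 := fun h => ha (by rw [Rat.cast_def, h, zero_div])
  have hx0 : x ≠ 0 := by rintro rfl; simp at ha
  refine ⟨?_, Rat.cast_inv_of_ne_zero hnum⟩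
  rcases Int.natAbs_eq x.num with h | h <;> rw [h] at hnum <;>
    simpa [Rat.den_inv_of_ne_zero hx0] using hnum

lemma div (hx : ReducesTo x a) (hy : ReducesTo y b) (hb : b ≠ 0) :
    ReducesTo (x / y) (a / b) := by
  simpa only [div_eq_mul_inv] using hx.mul (hy.inv hb)

lemma pow (hx : ReducesTo x a) (n : ℕ) : ReducesTo (x ^ n) (a ^ n) := by
  induction n with
  | zero => simpa only [pow_zero] using one
  | succ n ih => simpa only [pow_succ] using ih.mul hx

lemma sum {ι : Type*} {s : Finset ι} {f : ι → ℚ} {g : ι → K}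
    (h : ∀ i ∈ s, ReducesTo (f i) (g i)) : ReducesTo (∑ i ∈ s, f i) (∑ i ∈ s, g i) := by
  classical
  induction s using Finset.induction_on with
  | empty => simpa using intCast (K := K) 0
  | insert i s hi ih =>
    rw [sum_insert hi, sum_insert hi]
    exact (h i (mem_insert_self i s)).add (ih fun j hj => h j (mem_insert_of_mem hj))

lemma ratCongr {p : ℕ} [Fact p.Prime] {c : ZMod p} (hx : ReducesTo x c) (hy : ReducesTo y c) :
    ratCongr p 1 x y := by
  obtain ⟨hden, hnum⟩ := hx.sub hy
  have hp : (p : ℚ) ≠ 0 := mod_cast (Fact.out : p.Prime).ne_zero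
  rw [sub_self, Rat.cast_def, div_eq_zero_iff, or_iff_left hden,
    ZMod.intCast_zmod_eq_zero_iff_dvd] at hnum
  obtain ⟨k, hk⟩ := hnum
  have hxy : x - y = (k / (x - y).den : ℚ) * p := by
    rw [div_mul_eq_mul_div, mul_comm, ← Int.cast_natCast p, ← Int.cast_mul, ← hk, Rat.num_div_den]
  refine ⟨k / (x - y).den, by rw [pow_one, ← hxy], fun hdvd => hden ?_⟩
  have h := Rat.den_dvd k (x - y).den
  rw [Rat.divInt_eq_div] at h
  exact (ZMod.natCast_eq_zero_iff ..).2 (hdvd.trans (mod_cast h))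

lemma harmonic {n : ℕ} (hn : ∀ i < n, (i : K) + 1 ≠ 0) :
    ReducesTo (harmonic n) (∑ i ∈ range n, liCoeff (1 : K) 1 i) :=
  sum fun i hi => by
    simpa [liCoeff] using (natCast (K := K) (i + 1)).inv (mod_cast hn i (mem_range.1 hi))

end ReducesTo

end Reduction

section PrimeModulus

variable {p : ℕ} [Fact p.Prime]

local notation "recip" => liCoeff (1 : ZMod p)

local notation "altRecip" => liCoeff (-1 : ZMod p)

lemma natCast_add_one_ne_zero {i : ℕ} (hi : i < p - 1) : (i : ZMod p) + 1 ≠ 0 := by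
  rw [← Nat.cast_succ, Ne, ZMod.natCast_eq_zero_iff]
  exact Nat.not_dvd_of_pos_of_lt i.succ_pos (by omega)

lemma two_ne_zero_of_ne_two (hp : p ≠ 2) : (2 : ZMod p) ≠ 0 :=
  Ring.two_ne_zero (by rwa [ZMod.ringChar_zmod_n])

lemma three_ne_zero_of_five_le (hp : 5 ≤ p) : (3 : ZMod p) ≠ 0 := by
  exact_mod_cast natCast_add_one_ne_zero (p := p) (i := 2) (by omega)

lemma eq_zero_of_eq_neg (hp : p ≠ 2) {x : ZMod p} (hx : x = -x) : x = 0 :=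
  Ring.eq_self_iff_eq_zero_of_char_ne_two (by rwa [ZMod.ringChar_zmod_n]) |>.1 hx.symm

lemma sum_range_natCast_add_one (f : ZMod p → ZMod p) :
    ∑ i ∈ range (p - 1), f ((i : ZMod p) + 1) = ∑ u : (ZMod p)ˣ, f u := by
  refine sum_bij (fun i hi => Units.mk0 ((i : ZMod p) + 1)
    (natCast_add_one_ne_zero (mem_range.1 hi))) (by simp) (fun i hi j hj hij => ?_)
    (fun u _ => ?_) (by simp)
  · refine CharP.natCast_injOn_Iio (ZMod p) p ?_ ?_ (by simpa using hij) <;> grind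
  · have hu : 0 < (u : ZMod p).val := ZMod.val_pos.2 u.ne_zero
    have hlt := ZMod.val_lt (u : ZMod p)
    refine ⟨(u : ZMod p).val - 1, mem_range.2 (by omega), Units.ext ?_⟩
    simp [Nat.cast_sub hu]

lemma sum_range_natCast_add_one_pow (e : ℕ) :
    ∑ i ∈ range (p - 1), ((i : ZMod p) + 1) ^ e = if p - 1 ∣ e then -1 else 0 := by
  have h := FiniteField.sum_pow_units (ZMod p) e
  rw [ZMod.card] at h
  rw [← h, sum_range_natCast_add_one fun x => x ^ e]

lemma sum_recip_eq_zero {s : ℕ} (hs : ¬ p - 1 ∣ s) : ∑ i ∈ range (p - 1), recip s i = 0 := by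
  have hinv : ∑ u : (ZMod p)ˣ, ((u : ZMod p) ^ s)⁻¹ = ∑ u : (ZMod p)ˣ, (u : ZMod p) ^ s := by
    rw [← Equiv.sum_comp (Equiv.inv _)]
    exact sum_congr rfl fun u _ => by
      rw [Equiv.inv_apply, Units.val_inv_eq_inv_val, inv_pow, inv_inv]
  have h := sum_range_natCast_add_one_pow (p := p) s
  rw [if_neg hs, sum_range_natCast_add_one fun x => x ^ s, ← hinv,
    ← sum_range_natCast_add_one fun x => (x ^ s)⁻¹] at h
  simpa [liCoeff] using h

lemma reflectsWith_liCoeff {x : ZMod p} (hx : x * x = 1) (s : ℕ) :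
    ReflectsWith (x * (-1) ^ s) (p - 1) (liCoeff x s) := by
  intro j hj
  have hcast : ((p - 1 - 1 - j : ℕ) : ZMod p) + 1 = -((j : ZMod p) + 1) := by
    rw [eq_neg_iff_add_eq_zero, ← Nat.cast_succ, ← Nat.cast_succ, ← Nat.cast_add,
      show (p - 1 - 1 - j).succ + j.succ = p by omega, CharP.cast_eq_zero]
  have hpow : x ^ (p - 1 - 1 - j + 1) = x * x ^ (j + 1) := by
    have h : x ^ (p - 1 - 1 - j + 1) * x ^ (j + 1) = x := by
      rw [← pow_add, show p - 1 - 1 - j + 1 + (j + 1) = p by omega, ZMod.pow_card]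
    have hsq : x ^ (j + 1) * x ^ (j + 1) = 1 := by rw [← mul_pow, hx, one_pow]
    linear_combination x ^ (j + 1) * h - x ^ (p - 1 - 1 - j + 1) * hsq
  rw [liCoeff, liCoeff, hcast, hpow, neg_pow]
  rcases neg_one_pow_eq_or (ZMod p) s with hs | hs <;> rw [hs] <;> ring

lemma reflectsWith_recip (s : ℕ) : ReflectsWith ((-1) ^ s) (p - 1) (recip s) := by
  simpa using reflectsWith_liCoeff (x := (1 : ZMod p)) (by ring) s

lemma reflectsWith_altRecip (s : ℕ) : ReflectsWith ((-1) ^ (s + 1)) (p - 1) (altRecip s) := by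
  simpa [pow_succ'] using reflectsWith_liCoeff (x := (-1 : ZMod p)) (by ring) s

lemma sum_altRecip_eq_zero (hp : p ≠ 2) {s : ℕ} (hs : Even s) :
    ∑ i ∈ range (p - 1), altRecip s i = 0 :=
  eq_zero_of_eq_neg hp <| by
    simpa [hs.add_one.neg_one_pow] using (reflectsWith_altRecip (p := p) s).sum_eq

lemma two_mul_doubleSum_recip_altRecip {s t : ℕ} (hst : Odd (s + t)) (hs : ¬ p - 1 ∣ s) :
    2 * doubleSum (p - 1) (recip s) (altRecip t) = -∑ i ∈ range (p - 1), altRecip (s + t) i := by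
  rw [(reflectsWith_recip s).two_mul_doubleSum (reflectsWith_altRecip t)
      (by rw [← pow_add, ← add_assoc, hst.add_one.neg_one_pow]), sum_recip_eq_zero hs,
    liCoeff_mul_liCoeff, one_mul, zero_mul, zero_sub]

lemma four_mul_doubleSum_recip_altRecip (hp : 5 ≤ p) :
    4 * doubleSum (p - 1) (recip 1) (altRecip 1) = (∑ i ∈ range (p - 1), altRecip 1 i) ^ 2 := by
  have hshuffle := doubleSum_liCoeff_one_one (fun _ => natCast_add_one_ne_zero)
    (reflectsWith_altRecip (p := p) 1)
  have hstuffle := sum_mul_sum_eq_doubleSum (p - 1) (altRecip 1) (altRecip 1)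
  rw [liCoeff_mul_liCoeff, neg_one_mul, neg_neg,
    sum_recip_eq_zero (Nat.not_dvd_of_pos_of_lt (by omega) (by omega))] at hstuffle
  linear_combination -2 * hshuffle - hstuffle

lemma two_mul_doubleSum_altRecip_two_altRecip (hp : 5 ≤ p) :
    2 * doubleSum (p - 1) (altRecip 2) (altRecip 1) =
      -3 * ∑ i ∈ range (p - 1), altRecip 3 i := by
  have hshuffle := doubleSum_liCoeff_two_one (fun _ => natCast_add_one_ne_zero)
    (reflectsWith_altRecip (p := p) 1)
  have h21 := two_mul_doubleSum_recip_altRecip (p := p) (s := 2) (t := 1) (by decide)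
    (Nat.not_dvd_of_pos_of_lt (by omega) (by omega))
  have h12 := two_mul_doubleSum_recip_altRecip (p := p) (s := 1) (t := 2) (by decide)
    (Nat.not_dvd_of_pos_of_lt (by omega) (by omega))
  linear_combination 2 * hshuffle + h21 + 2 * h12

lemma doubleSum_recip_one_two_eq_half {m : ℕ} (hm : p - 1 = 2 * m) (h1 : ¬ p - 1 ∣ 1) :
    doubleSum (p - 1) (recip 1) (recip 2) =
      2 * doubleSum m (recip 1) (recip 2) + ∑ i ∈ range m, recip 3 i := by
  have hsum {j : ℕ} (hj : j < p - 1) := (reflectsWith_recip (p := p) 1).sum_range_sub hj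
  have h2 := reflectsWith_recip (p := p) 2
  simp only [sum_recip_eq_zero h1] at hsum
  rw [doubleSum, hm, sum_range_two_mul_fold, ← hm, doubleSum, mul_sum, ← sum_add_distrib]
  refine sum_congr rfl fun j hj => ?_
  have hj' : j < p - 1 := by grind
  have h3 : recip 1 j * recip 2 j = recip 3 j := by
    simpa using congrFun (liCoeff_mul_liCoeff (1 : ZMod p) 1 1 2) j
  rw [hsum hj', h2 j hj', sum_range_succ]
  linear_combination h3

lemma doubleSum_recip_one_two (hp : 5 ≤ p) :
    doubleSum (p - 1) (recip 1) (recip 2) = -2 * ∑ i ∈ range (p - 1), altRecip 3 i := by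
  obtain ⟨m, hm⟩ := (Fact.out (p := p.Prime)).even_sub_one (by omega)
  rw [← two_mul] at hm
  have h2 : (2 : ZMod p) ≠ 0 := two_ne_zero_of_ne_two (by omega)
  have hsum := two_pow_mul_sum_liCoeff_add_liCoeff_neg h2 1 2 m
  have hdouble := two_pow_mul_doubleSum_liCoeff_add_liCoeff_neg h2 1 1 0 1 m
  have hhalf := doubleSum_recip_one_two_eq_half hm (Nat.not_dvd_of_pos_of_lt one_pos (by omega))
  simp only [← hm, one_pow, zero_add, Nat.reduceAdd, Pi.add_apply, sum_add_distrib,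
    doubleSum_add_left, doubleSum_add_right] at hsum hdouble
  rw [sum_recip_eq_zero (Nat.not_dvd_of_pos_of_lt (by omega) (by omega))] at hsum
  have h12 := two_mul_doubleSum_recip_altRecip (p := p) (s := 1) (t := 2) (by decide)
    (Nat.not_dvd_of_pos_of_lt (by omega) (by omega))
  have h21 := two_mul_doubleSum_recip_altRecip (p := p) (s := 2) (t := 1) (by decide)
    (Nat.not_dvd_of_pos_of_lt (by omega) (by omega))
  have halt21 := two_mul_doubleSum_altRecip_two_altRecip hp
  have hflip := (reflectsWith_altRecip (p := p) 1).doubleSum_eq (reflectsWith_recip 2)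
  have haltflip := (reflectsWith_altRecip (p := p) 1).doubleSum_eq (reflectsWith_altRecip 2)
  refine mul_left_cancel₀ (three_ne_zero_of_five_le hp) ?_
  linear_combination -hhalf + 2 * hdouble + hsum - 2 * h12 - 2 * h21 + 2 * halt21 - 4 * hflip -
    4 * haltflip

lemma eight_mul_tripleSum_recip_altRecip_altRecip (hp : 5 ≤ p) :
    8 * tripleSum (p - 1) (recip 1) (altRecip 1) (altRecip 1) =
      (∑ i ∈ range (p - 1), altRecip 1 i) ^ 3 + 14 * ∑ i ∈ range (p - 1), altRecip 3 i := by
  have hstuffle := sum_mul_doubleSum (p - 1) (altRecip 1) (recip 1) (altRecip 1)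
  have hsymm : tripleSum (p - 1) (altRecip 1) (recip 1) (altRecip 1) = 0 :=
    eq_zero_of_eq_neg (by omega) <| by
      simpa using (reflectsWith_altRecip (p := p) 1).tripleSum_eq (reflectsWith_recip 1)
        (reflectsWith_altRecip 1)
  simp only [liCoeff_mul_liCoeff, mul_one, mul_neg, neg_neg, Nat.reduceAdd] at hstuffle
  linear_combination -4 * hstuffle - 4 * hsymm - 2 * two_mul_doubleSum_altRecip_two_altRecip hp -
    4 * doubleSum_recip_one_two hp +
    (∑ i ∈ range (p - 1), altRecip 1 i) * four_mul_doubleSum_recip_altRecip hp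

lemma twelve_mul_sum_harmonic_mul_harmonic_div (hp : 5 ≤ p) {m : ℕ} (hm : p - 1 = 2 * m) :
    12 * ∑ k ∈ range m, (∑ i ∈ range (2 * k + 2), recip 1 i) * (∑ i ∈ range (2 * k), recip 1 i) /
        ((k : ZMod p) + 1) =
      24 * (∑ i ∈ range (p - 1), altRecip 1 i) + 6 * (∑ i ∈ range (p - 1), altRecip 1 i) ^ 2 +
        (∑ i ∈ range (p - 1), altRecip 1 i) ^ 3 - doubleSum (p - 1) (recip 1) (recip 2) := by
  have hsymm : tripleSum (p - 1) (recip 1) (recip 1) (recip 1) = 0 :=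
    eq_zero_of_eq_neg (by omega) <| by
      simpa using (reflectsWith_recip (p := p) 1).tripleSum_eq (reflectsWith_recip 1)
        (reflectsWith_recip 1)
  have hshuffle := tripleSum_liCoeff_one_one (fun _ => natCast_add_one_ne_zero)
    (reflectsWith_altRecip (p := p) 1)
  have h12 := two_mul_doubleSum_recip_altRecip (p := p) (s := 1) (t := 2) (by decide)
    (Nat.not_dvd_of_pos_of_lt (by omega) (by omega))
  have h21 := two_mul_doubleSum_recip_altRecip (p := p) (s := 2) (t := 1) (by decide)
    (Nat.not_dvd_of_pos_of_lt (by omega) (by omega))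
  have hflip := (reflectsWith_recip (p := p) 1).doubleSum_eq (reflectsWith_recip 2)
  rw [sum_harmonic_mul_harmonic_div fun i hi => natCast_add_one_ne_zero (hm ▸ hi), ← hm,
    doubleSum_add_right, doubleSum_add_right, sum_altRecip_eq_zero (by omega) even_two]
  linear_combination 24 * hsymm - 8 * hshuffle + eight_mul_tripleSum_recip_altRecip_altRecip hp +
    6 * h12 + 6 * h21 + 12 * hflip + 6 * four_mul_doubleSum_recip_altRecip hp +
    doubleSum_recip_one_two hp

lemma choose_pred_prime {k : ℕ} (hk : k < p) : ((p - 1).choose k : ZMod p) = (-1) ^ k := by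
  have hp := Fact.out (p := p.Prime)
  induction k with
  | zero => simp
  | succ k ih =>
    have hpascal := Nat.choose_succ_succ' (p - 1) k
    rw [Nat.sub_add_cancel hp.one_le] at hpascal
    have hzero : (p.choose (k + 1) : ZMod p) = 0 :=
      (ZMod.natCast_eq_zero_iff ..).2 (hp.dvd_choose_self k.succ_ne_zero hk)
    rw [hpascal, Nat.cast_add, ih (by omega)] at hzero
    linear_combination hzero

lemma sum_choose_div_add_one (n : ℕ) :
    ∑ i ∈ range n, (n.choose i : ℚ) / (i + 1) = 2 * ((2 ^ n - 1) / (n + 1)) := by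
  have hterm (i : ℕ) : (n.choose i : ℚ) / (i + 1) = ((n + 1).choose (i + 1) : ℚ) / (n + 1) := by
    rw [div_eq_div_iff (by positivity) (by positivity)]
    exact_mod_cast (mul_comm _ _).trans (Nat.add_one_mul_choose_eq n i)
  have hpow : ∑ i ∈ range (n + 2), ((n + 1).choose i : ℚ) = 2 ^ (n + 1) := by
    exact_mod_cast Nat.sum_range_choose (n + 1)
  rw [sum_range_succ, sum_range_succ', Nat.choose_self, Nat.choose_zero_right] at hpow
  simp only [hterm, ← sum_div]
  rw [← mul_div_assoc]
  congr 1
  push_cast at hpow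
  linear_combination hpow

lemma reducesTo_fermatQ (hp : p ≠ 2) :
    ReducesTo (fermatQ p) (-(∑ i ∈ range (p - 1), altRecip 1 i) / 2) := by
  have hcast : ((p - 1 : ℕ) : ℚ) + 1 = p := mod_cast Nat.sub_add_cancel (NeZero.one_le (n := p))
  have hfermat : fermatQ p = (∑ i ∈ range (p - 1), ((p - 1).choose i : ℚ) / (i + 1)) / 2 := by
    rw [sum_choose_div_add_one, fermatQ, hcast]
    ring
  rw [hfermat, ← sum_neg_distrib]
  refine (ReducesTo.sum fun i hi => ?_).div (.ofNat 2) (two_ne_zero_of_ne_two hp)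
  have hi' := mem_range.1 hi
  have hne : ((i + 1 : ℕ) : ZMod p) ≠ 0 := mod_cast natCast_add_one_ne_zero hi'
  have h := (ReducesTo.natCast (K := ZMod p) ((p - 1).choose i)).div (.natCast (i + 1)) hne
  rw [choose_pred_prime (by omega)] at h
  convert h using 1
  · push_cast; rfl
  · simp [liCoeff, pow_succ, neg_div]

lemma reducesTo_bernoulli {n : ℕ} (hn : n < p - 1) :
    ReducesTo (bernoulli n) ((bernoulli n : ℚ) : ZMod p) := by
  suffices h : ∃ b : ZMod p, ReducesTo (bernoulli n) b from ⟨h.choose_spec.1, rfl⟩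
  obtain ⟨k, rfl | rfl⟩ := n.even_or_odd'
  · obtain ⟨z, hz⟩ := Bernoulli.vonStaudt_clausen k
    rw [eq_sub_of_add_eq hz.symm]
    refine ⟨_, (ReducesTo.intCast z).sub (.sum (g := fun q : ℕ => 1 / (q : ZMod p)) fun q hq => ?_)⟩
    refine .div .one (.natCast q) ?_
    rw [Ne, ZMod.natCast_eq_zero_iff]
    simp only [mem_filter, mem_range] at hq
    exact Nat.not_dvd_of_pos_of_lt hq.2.1.pos (by omega)
  · rcases eq_or_ne k 0 with rfl | hk
    · rw [mul_zero, zero_add, bernoulli_one]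
      exact ⟨_, ReducesTo.one.neg.div (.ofNat 2) (two_ne_zero_of_ne_two (by omega))⟩
    · rw [bernoulli_eq_zero_of_odd (odd_two_mul_add_one k) (by omega)]
      exact ⟨0, by simpa using ReducesTo.intCast (K := ZMod p) 0⟩

lemma recip_eq_pow {s i : ℕ} (hs : s ≤ p - 1) (hi : i < p - 1) :
    recip s i = ((i : ZMod p) + 1) ^ (p - 1 - s) := by
  have hne := natCast_add_one_ne_zero hi
  rw [liCoeff, one_pow, div_eq_iff (pow_ne_zero _ hne), ← pow_add, Nat.sub_add_cancel hs,
    ZMod.pow_card_sub_one_eq_one hne]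

lemma sum_recip_eq_sum_bernoulli (hp : p ≠ 2) {n : ℕ} (hn : n ≤ p - 1) :
    ∑ i ∈ range n, recip 1 i =
      -∑ i ∈ range (p - 1),
        (-1) ^ i * ((bernoulli i : ℚ) : ZMod p) * ((n : ZMod p) + 1) ^ (p - 1 - i) := by
  have hp2 : 2 < p := (Fact.out : p.Prime).two_le.lt_of_ne' hp
  have hpred : p - 1 - 1 + 1 = p - 1 := by omega
  have hcast : ((p - 1 : ℕ) : ZMod p) = -1 := by simp [Nat.cast_sub (NeZero.one_le (n := p))]
  have hcastQ : ((p - 1 - 1 : ℕ) : ℚ) + 1 = (p - 1 : ℕ) := by exact_mod_cast hpred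
  have hrecip : ReducesTo (∑ k ∈ range (n + 1), (k : ℚ) ^ (p - 1 - 1))
      (∑ i ∈ range n, recip 1 i) := by
    rw [sum_range_succ', Nat.cast_zero, zero_pow (by omega), add_zero]
    refine .sum fun i hi => ?_
    rw [recip_eq_pow (by omega) (by grind)]
    exact_mod_cast (ReducesTo.natCast (K := ZMod p) (i + 1)).pow _
  have hfaulhaber : ReducesTo (∑ k ∈ range (n + 1), (k : ℚ) ^ (p - 1 - 1))
      (∑ i ∈ range (p - 1), ((bernoulli i : ℚ) : ZMod p) * (p - 1).choose i *
        ((n + 1 : ℕ) : ZMod p) ^ (p - 1 - i) / ((p - 1 : ℕ) : ZMod p)) := by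
    rw [sum_range_pow, hcastQ, hpred]
    exact .sum fun i hi => (((reducesTo_bernoulli (mem_range.1 hi)).mul (.natCast _)).mul
      ((ReducesTo.natCast (n + 1)).pow _)).div (.natCast (p - 1)) (by simp [hcast])
  rw [← hrecip.2, hfaulhaber.2, ← sum_neg_distrib]
  refine sum_congr rfl fun i hi => ?_
  rw [hcast, choose_pred_prime (by grind), Nat.cast_succ, div_neg, div_one]
  ring

lemma doubleSum_recip_one_two_eq_bernoulli (hp : 5 ≤ p) :
    doubleSum (p - 1) (recip 1) (recip 2) = ((bernoulli (p - 3) : ℚ) : ZMod p) := by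
  have hpower (i : ℕ) (hi : i ∈ range (p - 1)) :
      ∑ j ∈ range (p - 1), ((j : ZMod p) + 1) ^ (p - 1 - i + (p - 1 - 2)) =
        if i = p - 3 then -1 else 0 := by
    have hdvd : p - 1 ∣ p - 1 - i + (p - 1 - 2) ↔ i = p - 3 := by
      have hi' := mem_range.1 hi
      refine ⟨fun ⟨c, hc⟩ => ?_, fun h => ⟨1, by omega⟩⟩
      have hc0 : 0 < c := Nat.pos_of_ne_zero fun h => by rw [h] at hc; omega
      have hc2 : c < 2 := by
        by_contra! h
        have := Nat.mul_le_mul_left (p - 1) h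
        omega
      obtain rfl : c = 1 := by omega
      omega
    simp only [sum_range_natCast_add_one_pow, hdvd]
  have hswap : doubleSum (p - 1) (recip 1) (recip 2) =
      -∑ i ∈ range (p - 1), (-1) ^ i * ((bernoulli i : ℚ) : ZMod p) *
        ∑ j ∈ range (p - 1), ((j : ZMod p) + 1) ^ (p - 1 - i + (p - 1 - 2)) := by
    simp only [mul_sum]
    rw [doubleSum, sum_comm, ← sum_neg_distrib]
    refine sum_congr rfl fun j hj => ?_
    have hj' := mem_range.1 hj
    rw [sum_recip_eq_sum_bernoulli (by omega) hj'.le, recip_eq_pow (by omega) hj', neg_mul, sum_mul]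
    simp only [pow_add, mul_assoc]
  have heven : Even (p - 3) :=
    Nat.Odd.sub_odd ((Fact.out : p.Prime).odd_of_ne_two (by omega)) (by decide)
  rw [hswap, sum_congr rfl fun i hi => by rw [hpower i hi]]
  simp [heven.neg_one_pow, show p - 3 < p - 1 by omega]

lemma reducesTo_sum_harmonic_mul_harmonic_div {m : ℕ} (hm : 2 * m < p) :
    ReducesTo (∑ k ∈ Icc 1 m, harmonic (2 * k) * harmonic (2 * k - 2) / k)
      (∑ k ∈ range m, (∑ i ∈ range (2 * k + 2), recip 1 i) *
        (∑ i ∈ range (2 * k), recip 1 i) / ((k : ZMod p) + 1)) := by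
  have hne {i : ℕ} (hi : i < 2 * m) : (i : ZMod p) + 1 ≠ 0 := natCast_add_one_ne_zero (by omega)
  rw [← Ico_add_one_right_eq_Icc, sum_Ico_eq_sum_range, Nat.add_sub_cancel]
  refine .sum fun k hk => ?_
  have hk' := mem_range.1 hk
  rw [add_comm 1 k, Nat.mul_succ, Nat.add_sub_cancel, ← Nat.cast_succ]
  exact ((ReducesTo.harmonic fun i hi => hne (by omega)).mul
    (.harmonic fun i hi => hne (by omega))).div (.natCast (k + 1))
      (by rw [Nat.cast_succ]; exact hne (by omega))

end PrimeModulus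

theorem sum_H2k_H2k_sub_two_div_k (p : ℕ) (hp : p.Prime) (hp3 : 3 < p) :
    ratCongr p 1
      (∑ k ∈ Finset.Icc 1 ((p - 1) / 2), harmonic (2 * k) * harmonic (2 * k - 2) / k)
      (-4 * fermatQ p + 2 * fermatQ p ^ 2 - (2 / 3) * fermatQ p ^ 3 -
        (1 / 12) * bernoulli (p - 3)) := by
  have : Fact p.Prime := ⟨hp⟩
  obtain ⟨m, hm⟩ := (hp.even_sub_one (by omega)).two_dvd
  have hp5 : 5 ≤ p := by omega
  have h2 : (2 : ZMod p) ≠ 0 := two_ne_zero_of_ne_two (by omega)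
  have h3 := three_ne_zero_of_five_le hp5
  have h12 : (12 : ZMod p) ≠ 0 := by
    simpa only [show (12 : ZMod p) = 2 * 2 * 3 by norm_num] using mul_ne_zero (mul_ne_zero h2 h2) h3
  have hsum := reducesTo_sum_harmonic_mul_harmonic_div (p := p) (m := m) (by omega)
  have hq := reducesTo_fermatQ (p := p) (by omega)
  have hB := reducesTo_bernoulli (p := p) (n := p - 3) (by omega)
  rw [← doubleSum_recip_one_two_eq_bernoulli hp5] at hB
  rw [show (p - 1) / 2 = m by omega]
  refine hsum.ratCongr ?_
  rw [← mul_div_cancel_left₀ (∑ k ∈ range m, _ : ZMod p) h12,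
    twelve_mul_sum_harmonic_mul_harmonic_div hp5 hm]
  convert ((((ReducesTo.ofNat 4).neg.mul hq).add ((ReducesTo.ofNat 2).mul (hq.pow 2))).sub
    (((ReducesTo.ofNat 2).div (.ofNat 3) h3).mul (hq.pow 3))).sub
      ((ReducesTo.one.div (.ofNat 12) h12).mul hB) using 1
  field_simp
  ring
end
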